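/- Let B be a symplectic form on a 2J-dimensional vector space V over F_2 with J ≥ 2, and let D ⊆ V be an affine quadric with #D = 2^{J−1}(2^J+1). Then every affine Lagrangian subspace v + L of V that is not contained in D satisfies #((v+L) ∩ (V∖D)) = 2^{J−1} = #((v+L) ∩ D). Moreover, restricted to the affine Lagrangian subspaces not contained in D: the assignment v + L ↦ (v+L) ∩ D is injective, while the assignment v + L ↦ (v+L) ∩ (V∖D) is exactly three-to-one, i.e., every set of the form (v+L) ∩ (V∖D) arises from exactly three affine Lagrangian subspaces not contained in D. Consequently every pair of distinct points of V∖D is contained in exactly ∏_{j=2}^{J−1}(2^j+1) of the distinct sets of the form (v+L) ∩ (V∖D), so these sets form a BIBD on the point set V∖D with parameters V = 2^{J−1}(2^J−1), K = 2^{J−1}, Λ = ∏_{j=2}^{J−1}(2^j+1) (an empty product being 1). -/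

import Mathlib

open scoped BigOperators

noncomputable section

/-- A bilinear form is symplectic: alternating and nondegenerate. -/
def IsSymplectic {F V : Type*} [CommRing F] [AddCommGroup V] [Module F V]
    (B : V →ₗ[F] V →ₗ[F] F) : Prop :=
  (∀ v, B v v = 0) ∧ ∀ v : V, v ≠ 0 → ∃ w, B v w ≠ 0

/-- The orthogonal complement of a subset with respect to a bilinear form. -/
def sympPerp {F V : Type*} [CommRing F] [AddCommGroup V] [Module F V]
    (B : V →ₗ[F] V →ₗ[F] F) (S : Set V) : Set V :=
  {w | ∀ v ∈ S, B v w = 0}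

/-- A subspace is Lagrangian if it equals its own orthogonal complement. -/
def IsLagrangian {F V : Type*} [CommRing F] [AddCommGroup V] [Module F V]
    (B : V →ₗ[F] V →ₗ[F] F) (L : Submodule F V) : Prop :=
  (L : Set V) = sympPerp B (L : Set V)

/-- The affine Lagrangian subspaces: cosets `v + L` of Lagrangian subspaces. -/
def affineLagrangians {F V : Type*} [CommRing F] [AddCommGroup V] [Module F V]
    (B : V →ₗ[F] V →ₗ[F] F) : Set (Set V) :=
  {A | ∃ (v : V) (L : Submodule F V), IsLagrangian B L ∧
        A = (fun x => v + x) '' (L : Set V)}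

/-- `Q` is a quadratic form yielding the bilinear form `B` over `F₂`. -/
def YieldsForm {V : Type*} [AddCommGroup V] [Module (ZMod 2) V]
    (B : V →ₗ[ZMod 2] V →ₗ[ZMod 2] ZMod 2) (Q : V → ZMod 2) : Prop :=
  ∀ v₁ v₂ : V, Q (v₁ + v₂) + Q v₁ + Q v₂ = B v₁ v₂

/-- The quadric of a quadratic form: its set of zeros. -/
def quadric {V : Type*} (Q : V → ZMod 2) : Set V := {v | Q v = 0}

/-- A subset is an affine quadric if it or its complement is the quadric of
some quadratic form yielding `B`. -/
def IsAffineQuadric {V : Type*} [AddCommGroup V] [Module (ZMod 2) V]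
    (B : V →ₗ[ZMod 2] V →ₗ[ZMod 2] ZMod 2) (D : Set V) : Prop :=
  ∃ Q : V → ZMod 2, YieldsForm B Q ∧ (D = quadric Q ∨ D = (quadric Q)ᶜ)

section Helpers

set_option linter.unusedSectionVars false

variable {J : ℕ} {V : Type*} [AddCommGroup V] [Module (ZMod 2) V] [Finite V]
    {B : V →ₗ[ZMod 2] V →ₗ[ZMod 2] ZMod 2}

lemma aux_add_self (x : V) : x + x = 0 := by
  have h : (2 : ZMod 2) • x = x + x := two_smul _ x
  rw [← h, show (2 : ZMod 2) = 0 from rfl, zero_smul]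

lemma aux_symm (hB : IsSymplectic B) (x y : V) : B x y = B y x := by
  have h := hB.1 (x + y)
  simp only [map_add, LinearMap.add_apply, hB.1, zero_add, add_zero] at h
  generalize B x y = a at *
  generalize B y x = b at *
  revert a b; decide

lemma aux_nondeg (hB : IsSymplectic B) : LinearMap.Nondegenerate B := by
  refine ⟨fun x hx => ?_, fun x hx => ?_⟩
  · by_contra h
    obtain ⟨w, hw⟩ := hB.2 x h
    exact hw (hx w)
  · by_contra h
    obtain ⟨w, hw⟩ := hB.2 x h
    exact hw (by rw [aux_symm hB]; exact hx w)

abbrev perpS (B : V →ₗ[ZMod 2] V →ₗ[ZMod 2] ZMod 2) (W : Submodule (ZMod 2) V) :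
    Submodule (ZMod 2) V := LinearMap.BilinForm.orthogonal B W

lemma mem_perpS {W : Submodule (ZMod 2) V} {x : V} :
    x ∈ perpS B W ↔ ∀ w ∈ W, B w x = 0 := Iff.rfl

lemma finrank_perpS (hB : IsSymplectic B) (W : Submodule (ZMod 2) V) :
    Module.finrank (ZMod 2) W + Module.finrank (ZMod 2) (perpS B W)
      = Module.finrank (ZMod 2) V := by
  have := LinearMap.BilinForm.finrank_orthogonal (B := B) (aux_nondeg hB) W
  have h2 := Submodule.finrank_le W
  unfold perpS
  omega

lemma lag_iff {L : Submodule (ZMod 2) V} : IsLagrangian B L ↔ L = perpS B L := by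
  unfold IsLagrangian
  constructor
  · intro h
    apply SetLike.coe_injective
    rw [h]; rfl
  · intro h
    conv_lhs => rw [h]
    rfl

lemma lag_mem {L : Submodule (ZMod 2) V} (hL : IsLagrangian B L) {x : V} :
    x ∈ L ↔ ∀ w ∈ L, B w x = 0 := by
  conv_lhs => rw [lag_iff.1 hL]
  exact mem_perpS

lemma lag_finrank (hB : IsSymplectic B) (hdim : Module.finrank (ZMod 2) V = 2 * J)
    {L : Submodule (ZMod 2) V} (hL : IsLagrangian B L) : Module.finrank (ZMod 2) L = J := by
  have h := finrank_perpS hB L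
  rw [← lag_iff.1 hL] at h
  omega

lemma card_sub (W : Submodule (ZMod 2) V) :
    Nat.card W = 2 ^ Module.finrank (ZMod 2) W := by
  rw [Module.natCard_eq_pow_finrank (K := ZMod 2), Nat.card_zmod]

lemma lag_of_iso (hB : IsSymplectic B) (hdim : Module.finrank (ZMod 2) V = 2 * J)
    {L : Submodule (ZMod 2) V} (hL : L ≤ perpS B L) (h : Module.finrank (ZMod 2) L = J) :
    IsLagrangian B L := by
  rw [lag_iff]
  have h1 := finrank_perpS hB L
  exact Submodule.eq_of_le_of_finrank_le hL (by omega)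

lemma iso_sup (hB : IsSymplectic B) {W : Submodule (ZMod 2) V} (hW : W ≤ perpS B W)
    {u : V} (hu : u ∈ perpS B W) (hu' : u ∉ W) :
    W ⊔ Submodule.span (ZMod 2) {u} ≤ perpS B (W ⊔ Submodule.span (ZMod 2) {u}) ∧
    Module.finrank (ZMod 2) (W ⊔ Submodule.span (ZMod 2) {u} : Submodule (ZMod 2) V)
      = Module.finrank (ZMod 2) W + 1 := by
  constructor
  · intro x hx y hy
    obtain ⟨w, hw, z, hz, rfl⟩ := Submodule.mem_sup.1 hx
    obtain ⟨w', hw', z', hz', rfl⟩ := Submodule.mem_sup.1 hy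
    obtain ⟨a, rfl⟩ := Submodule.mem_span_singleton.1 hz
    obtain ⟨b, rfl⟩ := Submodule.mem_span_singleton.1 hz'
    have h1 : B w' w = 0 := hW hw w' hw'
    have h2 : B w' u = 0 := hu w' hw'
    have h3 : B u w = 0 := by rw [aux_symm hB]; exact hu w hw
    simp [h1, h2, h3, hB.1]
  · have h0 : u ≠ 0 := fun h => hu' (h ▸ W.zero_mem)
    have h := Submodule.finrank_sup_add_finrank_inf_eq W (Submodule.span (ZMod 2) {u})
    have hd : W ⊓ Submodule.span (ZMod 2) {u} = ⊥ := by
      rw [← disjoint_iff]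
      exact (Submodule.disjoint_span_singleton' h0).2 hu'
    rw [hd, finrank_bot, finrank_span_singleton h0] at h
    omega

open Classical in
lemma lag_count (hB : IsSymplectic B) (hdim : Module.finrank (ZMod 2) V = 2 * J) (n : ℕ) :
    ∀ W : Submodule (ZMod 2) V, W ≤ perpS B W → Module.finrank (ZMod 2) W + n = J →
      {L : Submodule (ZMod 2) V | IsLagrangian B L ∧ W ≤ L}.ncard
        = ∏ j ∈ Finset.Icc 1 n, (2 ^ j + 1) := by
  induction n with
  | zero =>
    intro W hW hk
    have hWl := lag_of_iso hB hdim hW (by omega)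
    have : {L : Submodule (ZMod 2) V | IsLagrangian B L ∧ W ≤ L} = {W} := by
      ext L
      simp only [Set.mem_ofPred_eq, Set.mem_singleton_iff]
      constructor
      · rintro ⟨h1, h2⟩
        refine (Submodule.eq_of_le_of_finrank_le h2 ?_).symm
        rw [lag_finrank hB hdim h1]; omega
      · rintro rfl; exact ⟨hWl, le_rfl⟩
    rw [this]; simp
  | succ n ih =>
    intro W hW hk
    have : Fintype V := Fintype.ofFinite V
    have : Fintype (Submodule (ZMod 2) V) := Fintype.ofFinite _
    let S : Finset V := Finset.univ.filter (fun u => u ∈ perpS B W ∧ u ∉ W)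
    let T : Finset (Submodule (ZMod 2) V) :=
      Finset.univ.filter (fun L => IsLagrangian B L ∧ W ≤ L)
    have cardS : ∀ X : Submodule (ZMod 2) V,
        (Finset.univ.filter (fun u => u ∈ X)).card = 2 ^ Module.finrank (ZMod 2) X := by
      intro X
      rw [← card_sub X, Nat.card_eq_fintype_card, Fintype.card_subtype]
    have cardD : ∀ X : Submodule (ZMod 2) V, W ≤ X →
        (Finset.univ.filter (fun u => u ∈ X ∧ u ∉ W)).card + 2 ^ Module.finrank (ZMod 2) W
          = 2 ^ Module.finrank (ZMod 2) X := by
      intro X hX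
      rw [← cardS X, ← cardS W, ← Finset.card_union_of_disjoint]
      · congr 1
        ext u
        simp only [Finset.mem_union, Finset.mem_filter, Finset.mem_univ, true_and]
        constructor
        · rintro (h | h)
          · exact h.1
          · exact hX h
        · intro h; by_cases h' : u ∈ W <;> simp [h, h']
      · rw [Finset.disjoint_left]
        intro u h1 h2
        simp only [Finset.mem_filter, Finset.mem_univ, true_and] at h1 h2
        exact h1.2 h2
    have key := Finset.card_mul_eq_card_mul (s := S) (t := T)
      (fun u L => u ∈ L) (m := ∏ j ∈ Finset.Icc 1 n, (2 ^ j + 1))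
      (n := 2 ^ J - 2 ^ Module.finrank (ZMod 2) W) ?_ ?_
    · have hTn : {L : Submodule (ZMod 2) V | IsLagrangian B L ∧ W ≤ L}.ncard = T.card := by
        rw [← Set.ncard_coe_finset]; congr 1; ext L; simp [T]
      rw [hTn]
      have hS : S.card + 2 ^ Module.finrank (ZMod 2) W
          = 2 ^ Module.finrank (ZMod 2) (perpS B W) := cardD _ hW
      have hf := finrank_perpS hB W
      generalize Module.finrank (ZMod 2) W = k at *
      have e1 : Module.finrank (ZMod 2) (perpS B W) = k + (n+1) + (n+1) := by omega
      have e2 : J = k + (n + 1) := by omega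
      rw [e1] at hS
      rw [e2] at key
      rw [Finset.prod_Icc_succ_top (by omega)]
      generalize (∏ j ∈ Finset.Icc 1 n, (2 ^ j + 1)) = P at *
      have hp : 2 ≤ 2 ^ (n+1) := by
        rw [pow_succ]; have := Nat.one_le_two_pow (n := n); omega
      have hq : 1 ≤ 2 ^ k := Nat.one_le_two_pow
      rw [pow_add] at key
      rw [pow_add, pow_add] at hS
      generalize 2 ^ (n+1) = p at *
      generalize 2 ^ k = q at *
      obtain ⟨r, rfl⟩ : ∃ r, p = r + 1 := ⟨p - 1, by omega⟩
      have e3 : q * (r+1) - q = q * r := by rw [mul_add, mul_one]; omega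
      have e4 : S.card = (q * r) * (r + 1 + 1) := by nlinarith
      rw [e3, e4] at key
      have : 0 < q * r := Nat.mul_pos (by omega) (by omega)
      apply Nat.eq_of_mul_eq_mul_left this
      linarith
    · intro u hu
      simp only [S, Finset.mem_filter, Finset.mem_univ, true_and] at hu
      obtain ⟨h1, h2⟩ := iso_sup hB hW hu.1 hu.2
      rw [← ih _ h1 (by omega), ← Set.ncard_coe_finset]
      congr 1
      ext L
      simp [T, Finset.bipartiteAbove, and_assoc]
    · intro L hL
      simp only [T, Finset.mem_filter, Finset.mem_univ, true_and] at hL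
      have h1 := cardD L hL.2
      rw [lag_finrank hB hdim hL.1] at h1
      rw [← h1, Nat.add_sub_cancel]
      congr 1
      ext u
      simp only [S, Finset.bipartiteBelow, Finset.mem_filter, Finset.mem_univ, true_and]
      constructor
      · rintro ⟨⟨_, h⟩, h'⟩; exact ⟨h', h⟩
      · rintro ⟨h', h⟩
        exact ⟨⟨fun w hw => (lag_mem hL.1).1 h' w (hL.2 hw), h⟩, h'⟩

variable {f : V → ZMod 2}

lemma z2_ne {a b : ZMod 2} (h : a ≠ b) : a = b + 1 := by
  revert a b; decide

lemma f_affine (hf : ∀ x y, f (x + y) + f x + f y + f 0 = B x y)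
    {L : Submodule (ZMod 2) V} (hL : IsLagrangian B L) (v : V) {l l' : V} (hl : l ∈ L)
    (hl' : l' ∈ L) : f (v + (l + l')) = f (v + l) + f (v + l') + f v := by
  have h1 := hf (v + l) l'
  have h2 := hf v l'
  have h3 : B l l' = 0 := (lag_mem hL).1 hl' l hl
  rw [map_add, LinearMap.add_apply, h3, add_zero, ← h2, add_assoc v] at h1
  clear h2 hf
  generalize f (v + (l + l')) = a at *
  generalize f (v + l) = b at *
  generalize f (v + l') = c at *
  generalize f v = d at *
  generalize f l' = e at *
  generalize f 0 = g at *
  revert a b c d e g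
  decide

lemma coset_eq {L : Submodule (ZMod 2) V} {v x : V}
    (hx : x ∈ (fun y => v + y) '' (L : Set V)) :
    (fun y => v + y) '' (L : Set V) = (fun y => x + y) '' (L : Set V) := by
  obtain ⟨l, hl, rfl⟩ := hx
  ext z
  constructor
  · rintro ⟨m, hm, rfl⟩
    exact ⟨m - l, L.sub_mem hm hl, by simp⟩
  · rintro ⟨m, hm, rfl⟩
    exact ⟨l + m, L.add_mem hl hm, by simp [add_assoc]⟩

lemma mem_coset {L : Submodule (ZMod 2) V} {v l : V} :
    v + l ∈ (fun y => v + y) '' (L : Set V) ↔ l ∈ L := by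
  simp

lemma coset_inj {L L' : Submodule (ZMod 2) V} {v : V}
    (h : (fun y => v + y) '' (L : Set V) = (fun y => v + y) '' (L' : Set V)) : L = L' := by
  ext l
  rw [← mem_coset (v := v), h, mem_coset]

def chi (a : ZMod 2) : ℤ := if a = 0 then 1 else -1

lemma chi_succ (a : ZMod 2) : chi (a + 1) = - chi a := by
  revert a; decide

open Classical in
lemma no_const (hB : IsSymplectic B)
    (hf : ∀ x y, f (x + y) + f x + f y + f 0 = B x y)
    (hcard : Nat.card V < 2 * {x | f x = 0}.ncard)
    {L : Submodule (ZMod 2) V} (hL : IsLagrangian B L) (v : V) :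
    ∃ l ∈ L, f (v + l) = 0 := by
  by_contra! hcon
  have hone : ∀ l ∈ L, f (v + l) = 1 := fun l hl => by
    have := z2_ne (hcon l hl); simpa using this
  have : Fintype V := Fintype.ofFinite V
  have hpos : 0 < ∑ x : V, chi (f x) := by
    have h1 : ∀ x, chi (f x) = 2 * (if f x = 0 then 1 else 0) - 1 := by
      intro x; unfold chi; split_ifs <;> rfl
    simp only [h1, Finset.sum_sub_distrib, ← Finset.mul_sum, Finset.sum_boole]
    have h2 : {x | f x = 0}.ncard = (Finset.univ.filter (fun x => f x = 0)).card := by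
      rw [← Set.ncard_coe_finset]; congr 1; ext; simp
    rw [h2, Nat.card_eq_fintype_card] at hcard
    simp only [Finset.sum_const, Finset.card_univ]
    zify at hcard
    simp only [nsmul_eq_mul, mul_one]
    linarith
  have hinner : ∀ x : V, ∑ l : L, chi (f (x + l)) ≤ 0 := by
    intro x
    by_cases hx : x - v ∈ L
    · apply Finset.sum_nonpos
      intro l _
      have : x + (l : V) = v + ((x - v) + l) := by abel
      rw [this, hone _ (L.add_mem hx l.2)]
      decide
    · rw [lag_mem hL] at hx
      push Not at hx
      obtain ⟨w, hw, hne⟩ := hx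
      have hw1 : f (x + w) = f x + 1 := by
        apply z2_ne
        intro h
        apply hne
        have h1 := hf x w
        have h2 := hf v w
        have h3 := hone w hw
        have h4 := hone 0 L.zero_mem
        rw [add_zero] at h4
        rw [map_sub, aux_symm hB w x, aux_symm hB w v, ← h1, ← h2, h3, h4, h]
        generalize f x = a
        generalize f w = b
        generalize f 0 = c
        revert a b c; decide
      have e : ∑ l : L, chi (f (x + l)) = ∑ l : L, chi (f (x + ((l + ⟨w, hw⟩ : L) : V))) :=
        (Equiv.sum_comp (Equiv.addRight (⟨w, hw⟩ : L)) (fun l : L => chi (f (x + l)))).symm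
      have e2 : ∀ l : L, chi (f (x + ((l + ⟨w, hw⟩ : L) : V))) = - chi (f (x + l)) := by
        intro l
        rw [← chi_succ]
        congr 1
        rw [Submodule.coe_add, f_affine hf hL x l.2 hw, hw1]
        generalize f x = a
        generalize f (x + l) = b
        revert a b; decide
      simp only [e2, Finset.sum_neg_distrib] at e
      linarith
  have htot : ∑ x : V, ∑ l : L, chi (f (x + l)) = Fintype.card L * ∑ x : V, chi (f x) := by
    rw [Finset.sum_comm]
    have : ∀ l : L, ∑ x : V, chi (f (x + l)) = ∑ x : V, chi (f x) := fun l =>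
      Equiv.sum_comp (Equiv.addRight (l : V)) (fun x => chi (f x))
    simp [this]
  have h1 : ∑ x : V, ∑ l : L, chi (f (x + l)) ≤ 0 := Finset.sum_nonpos fun x _ => hinner x
  have h2 : (0 : ℤ) < Fintype.card L := by exact_mod_cast Fintype.card_pos
  have := mul_pos h2 hpos
  linarith

lemma half (hB : IsSymplectic B) (hJ : 1 ≤ J) (hdim : Module.finrank (ZMod 2) V = 2 * J)
    (hf : ∀ x y, f (x + y) + f x + f y + f 0 = B x y)
    (hcard : Nat.card V < 2 * {x | f x = 0}.ncard)
    {A : Set V} (hA : A ∈ affineLagrangians B) (hAD : ¬ A ⊆ {x | f x = 0}) :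
    (A ∩ {x | f x = 0}ᶜ).ncard = 2 ^ (J - 1) ∧ (A ∩ {x | f x = 0}).ncard = 2 ^ (J - 1) := by
  obtain ⟨v0, L, hL, rfl⟩ := hA
  obtain ⟨v, hv, hv1⟩ := Set.not_subset.1 hAD
  rw [coset_eq hv]
  obtain ⟨w, hw, hw0⟩ := no_const hB hf hcard hL v
  replace hv1 : f v = 1 := by
    have := z2_ne (b := 0) hv1; simpa using this
  set A := (fun y => v + y) '' (L : Set V) with hAdef
  have hAc : A.ncard = 2 ^ J := by
    rw [hAdef, Set.ncard_image_of_injective _ (add_right_injective v),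
      ← lag_finrank hB hdim hL, ← card_sub]
    rfl
  have hsum := Set.ncard_inter_add_ncard_sdiff_eq_ncard A {x | f x = 0}
  rw [Set.sdiff_eq, hAc] at hsum
  have key : ∀ l ∈ L, f (v + (l + w)) = f (v + l) + 1 := by
    intro l hl
    rw [f_affine hf hL v hl hw, hw0, hv1, add_zero]
  have himg : (fun x => x + w) '' (A ∩ {x | f x = 0}) = A ∩ {x | f x = 0}ᶜ := by
    ext x
    constructor
    · rintro ⟨_, ⟨⟨l, hl, rfl⟩, h0⟩, rfl⟩
      refine ⟨⟨l + w, L.add_mem hl hw, by simp [add_assoc]⟩, ?_⟩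
      have h0 : f (v + l) = 0 := h0
      simp [add_assoc, key l hl, h0]
    · rintro ⟨⟨l, hl, rfl⟩, h0⟩
      have h0 : f (v + l) ≠ 0 := h0
      refine ⟨v + (l + w), ⟨⟨l + w, L.add_mem hl hw, rfl⟩, ?_⟩, ?_⟩
      · have := z2_ne h0
        simp only [Set.mem_ofPred_eq]
        rw [key l hl, this]; decide
      · simp [add_assoc, aux_add_self]
  have heq : (A ∩ {x | f x = 0}ᶜ).ncard = (A ∩ {x | f x = 0}).ncard := by
    rw [← himg, Set.ncard_image_of_injective _ (add_left_injective w)]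
  have : 2 ^ J = 2 * 2 ^ (J - 1) := by rw [← pow_succ']; congr 1; omega
  omega

lemma inj_part (hB : IsSymplectic B) (hJ : 1 ≤ J) (hdim : Module.finrank (ZMod 2) V = 2 * J)
    (hf : ∀ x y, f (x + y) + f x + f y + f 0 = B x y)
    (hcard : Nat.card V < 2 * {x | f x = 0}.ncard)
    {A₁ A₂ : Set V} (hA₁ : A₁ ∈ affineLagrangians B) (hA₂ : A₂ ∈ affineLagrangians B)
    (h₁ : ¬ A₁ ⊆ {x | f x = 0})
    (heq : A₁ ∩ {x | f x = 0} = A₂ ∩ {x | f x = 0}) : A₁ = A₂ := by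
  have hh := (half hB hJ hdim hf hcard hA₁ h₁).2
  obtain ⟨v₁, L₁, hL₁, rfl⟩ := hA₁
  obtain ⟨v₂, L₂, hL₂, rfl⟩ := hA₂
  have hne : ((fun y => v₁ + y) '' (L₁ : Set V) ∩ {x | f x = 0}).Nonempty := by
    apply Set.nonempty_of_ncard_ne_zero
    rw [hh]; positivity
  obtain ⟨h, hh1, hh0⟩ := hne
  have hh2 : h ∈ (fun y => v₂ + y) '' (L₂ : Set V) := by
    have : h ∈ (fun y => v₂ + y) '' (L₂ : Set V) ∩ {x | f x = 0} := heq ▸ ⟨hh1, hh0⟩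
    exact this.1
  rw [coset_eq hh1] at hh heq ⊢
  rw [coset_eq hh2] at heq ⊢
  have t12 : ∀ l ∈ L₁, f (h + l) = 0 → l ∈ L₂ := by
    intro l hl h0
    have : h + l ∈ (fun y => h + y) '' (L₂ : Set V) ∩ {x | f x = 0} :=
      heq ▸ ⟨mem_coset.2 hl, h0⟩
    exact mem_coset.1 this.1
  have t21 : ∀ l ∈ L₂, f (h + l) = 0 → l ∈ L₁ := by
    intro l hl h0
    have : h + l ∈ (fun y => h + y) '' (L₁ : Set V) ∩ {x | f x = 0} :=
      heq ▸ ⟨mem_coset.2 hl, h0⟩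
    exact mem_coset.1 this.1
  have f1 := lag_finrank hB hdim hL₁
  have f2 := lag_finrank hB hdim hL₂
  suffices hs : L₁ ≤ L₂ by
    rw [Submodule.eq_of_le_of_finrank_le hs (by omega)]
  by_contra hnle
  have hnle' : ¬ L₂ ≤ L₁ := fun hs =>
    hnle (Submodule.eq_of_le_of_finrank_le hs (by omega)).ge
  obtain ⟨a, ha1, ha2⟩ := SetLike.not_le_iff_exists.1 hnle
  obtain ⟨b, hb2, hb1⟩ := SetLike.not_le_iff_exists.1 hnle'
  have hHlt : Module.finrank (ZMod 2) (L₁ ⊓ L₂ : Submodule (ZMod 2) V) < J := by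
    rw [← f1]
    exact Submodule.finrank_lt_finrank_of_lt (inf_lt_left.2 hnle)
  have hHge : J - 1 ≤ Module.finrank (ZMod 2) (L₁ ⊓ L₂ : Submodule (ZMod 2) V) := by
    have hc := card_sub (L₁ ⊓ L₂)
    rw [← Nat.pow_le_pow_iff_right (a := 2) (by norm_num), ← hc, ← hh]
    have : ((L₁ ⊓ L₂ : Submodule (ZMod 2) V) : Set V).ncard
        = Nat.card (L₁ ⊓ L₂ : Submodule (ZMod 2) V) := rfl
    rw [← this, ← Set.ncard_image_of_injective ((L₁ ⊓ L₂ : Submodule (ZMod 2) V) : Set V)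
      (add_right_injective h)]
    apply Set.ncard_le_ncard _ (Set.toFinite _)
    rintro _ ⟨⟨l, hl, rfl⟩, h0⟩
    exact ⟨l, ⟨hl, t12 l hl h0⟩, rfl⟩
  have hiso : (L₁ ⊓ L₂ : Submodule (ZMod 2) V) ≤ perpS B (L₁ ⊓ L₂) := fun x hx w hw =>
    (lag_mem hL₁).1 hx.1 w hw.1
  have hab : a + b ∈ perpS B (L₁ ⊓ L₂) := fun w hw => by
    have e1 := (lag_mem hL₁).1 ha1 w hw.1
    have e2 := (lag_mem hL₂).1 hb2 w hw.2
    change B w (a + b) = 0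
    rw [map_add, e1, e2, add_zero]
  have hab' : a + b ∉ L₁ ⊓ L₂ := fun hw => hb1 ((L₁.add_mem_iff_right ha1).1 hw.1)
  obtain ⟨g1, g2⟩ := iso_sup hB hiso hab hab'
  have hL3 := lag_of_iso hB hdim g1 (by omega)
  obtain ⟨l, hl, hl0⟩ := no_const hB hf hcard hL3 (h + a)
  obtain ⟨m, hm, z, hz, rfl⟩ := Submodule.mem_sup.1 hl
  obtain ⟨c, rfl⟩ := Submodule.mem_span_singleton.1 hz
  have hc : c = 0 ∨ c = 1 := (by decide : ∀ c : ZMod 2, c = 0 ∨ c = 1) c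
  rcases hc with rfl | rfl
  · rw [zero_smul, add_zero, add_assoc] at hl0
    have := t12 (a + m) (L₁.add_mem ha1 hm.1) hl0
    exact ha2 ((L₂.add_mem_iff_left hm.2).1 this)
  · rw [one_smul] at hl0
    have e : h + a + (m + (a + b)) = h + (b + m) := by
      have := aux_add_self a
      calc _ = h + (b + m) + (a + a) := by abel
        _ = _ := by rw [this, add_zero]
    rw [e] at hl0
    have := t21 (b + m) (L₂.add_mem hb2 hm.2) hl0
    exact hb1 ((L₁.add_mem_iff_left hm.1).1 this)

lemma three_part (hB : IsSymplectic B) (hJ : 1 ≤ J) (hdim : Module.finrank (ZMod 2) V = 2 * J)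
    (hf : ∀ x y, f (x + y) + f x + f y + f 0 = B x y)
    (hcard : Nat.card V < 2 * {x | f x = 0}.ncard)
    {A : Set V} (hA : A ∈ affineLagrangians B) (hAD : ¬ A ⊆ {x | f x = 0}) :
    {A' ∈ affineLagrangians B | ¬A' ⊆ {x | f x = 0} ∧
      A' ∩ {x | f x = 0}ᶜ = A ∩ {x | f x = 0}ᶜ}.ncard = 3 := by
  have hh := (half hB hJ hdim hf hcard hA hAD).1
  have hA0 := hA
  obtain ⟨v0, L, hL, rfl⟩ := hA
  obtain ⟨v, hv, hv1⟩ := Set.not_subset.1 hAD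
  rw [coset_eq hv] at hA0 hh ⊢
  replace hv1 : f v = 1 := by
    have := z2_ne (b := 0) hv1; simpa using this
  let H : Submodule (ZMod 2) V :=
    { carrier := {l | l ∈ L ∧ f (v + l) = 1}
      add_mem' := by
        rintro a b ⟨ha, ha1⟩ ⟨hb, hb1⟩
        refine ⟨L.add_mem ha hb, ?_⟩
        rw [f_affine hf hL v ha hb, ha1, hb1, hv1]; decide
      zero_mem' := ⟨L.zero_mem, by rw [add_zero, hv1]⟩
      smul_mem' := by
        rintro c x ⟨hx, hx1⟩
        have hc : c = 0 ∨ c = 1 := (by decide : ∀ c : ZMod 2, c = 0 ∨ c = 1) c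
        rcases hc with rfl | rfl
        · rw [zero_smul]; exact ⟨L.zero_mem, by rw [add_zero, hv1]⟩
        · rw [one_smul]; exact ⟨hx, hx1⟩ }
  have hHm : ∀ l, l ∈ H ↔ l ∈ L ∧ f (v + l) = 1 := fun l => Iff.rfl
  have himg : (fun y => v + y) '' (L : Set V) ∩ {x | f x = 0}ᶜ
      = (fun y => v + y) '' (H : Set V) := by
    ext x
    constructor
    · rintro ⟨⟨l, hl, rfl⟩, h0⟩
      have h0 : f (v + l) ≠ 0 := h0
      exact ⟨l, (hHm l).2 ⟨hl, by simpa using z2_ne h0⟩, rfl⟩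
    · rintro ⟨l, hl, rfl⟩
      have hl := (hHm l).1 hl
      refine ⟨⟨l, hl.1, rfl⟩, ?_⟩
      simp [hl.2]
  have hHr : Module.finrank (ZMod 2) H + 1 = J := by
    rw [himg, Set.ncard_image_of_injective _ (add_right_injective v)] at hh
    have hc : (H : Set V).ncard = 2 ^ Module.finrank (ZMod 2) H := card_sub H
    rw [hc] at hh
    have := Nat.pow_right_injective le_rfl hh
    omega
  have hiso : H ≤ perpS B H := fun x hx w hw => (lag_mem hL).1 hx.1 w hw.1
  have hcnt := lag_count hB hdim 1 H hiso hHr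
  have hset : {A' ∈ affineLagrangians B | ¬A' ⊆ {x | f x = 0} ∧
      A' ∩ {x | f x = 0}ᶜ = (fun y => v + y) '' (L : Set V) ∩ {x | f x = 0}ᶜ}
      = (fun M : Submodule (ZMod 2) V => (fun y => v + y) '' (M : Set V)) ''
        {M | IsLagrangian B M ∧ H ≤ M} := by
    ext A'
    constructor
    · rintro ⟨⟨w, M, hM, rfl⟩, h1, h2⟩
      rw [himg] at h2
      have hvM : v ∈ (fun y => v + y) '' (H : Set V) := ⟨0, H.zero_mem, by simp⟩
      rw [← h2] at hvM
      rw [coset_eq hvM.1] at h2 ⊢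
      refine ⟨M, ⟨hM, fun l hl => ?_⟩, rfl⟩
      have : v + l ∈ (fun y => v + y) '' (H : Set V) := ⟨l, hl, rfl⟩
      rw [← h2] at this
      exact mem_coset.1 this.1
    · rintro ⟨M, ⟨hM, hHM⟩, rfl⟩
      have hMA : (fun y => v + y) '' (M : Set V) ∈ affineLagrangians B := ⟨v, M, hM, rfl⟩
      have hMD : ¬ (fun y => v + y) '' (M : Set V) ⊆ {x | f x = 0} := by
        intro hs
        have : f v = 0 := hs ⟨0, M.zero_mem, by simp⟩
        rw [hv1] at this; exact absurd this (by decide)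
      refine ⟨hMA, hMD, ?_⟩
      symm
      apply Set.eq_of_subset_of_ncard_le _ _ (Set.toFinite _)
      · intro x hx
        refine ⟨?_, hx.2⟩
        rw [himg] at hx
        exact Set.image_mono hHM hx
      · rw [hh, (half hB hJ hdim hf hcard hMA hMD).1]
  rw [hset, Set.ncard_image_of_injective _ (fun _ _ h => coset_inj h), hcnt]
  simp

open Classical in
lemma pair_part (hB : IsSymplectic B) (hJ : 2 ≤ J) (hdim : Module.finrank (ZMod 2) V = 2 * J)
    (hf : ∀ x y, f (x + y) + f x + f y + f 0 = B x y)
    (hcard : Nat.card V < 2 * {x | f x = 0}.ncard)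
    {x y : V} (hx : x ∈ {x | f x = 0}ᶜ) (hy : y ∈ {x | f x = 0}ᶜ) (hxy : x ≠ y) :
    {C : Set V | (∃ A ∈ affineLagrangians B, ¬A ⊆ {x | f x = 0} ∧ C = A ∩ {x | f x = 0}ᶜ) ∧
        x ∈ C ∧ y ∈ C}.ncard = ∏ j ∈ Finset.Icc 2 (J - 1), (2 ^ j + 1) := by
  set D : Set V := {x | f x = 0} with hD
  let u := y - x
  have hu : u ≠ 0 := sub_ne_zero.2 hxy.symm
  let W : Submodule (ZMod 2) V := Submodule.span (ZMod 2) {u}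
  have hWiso : W ≤ perpS B W := by
    intro a ha b hb
    obtain ⟨c, rfl⟩ := Submodule.mem_span_singleton.1 ha
    obtain ⟨d, rfl⟩ := Submodule.mem_span_singleton.1 hb
    simp [hB.1]
  have hWr : Module.finrank (ZMod 2) W = 1 := finrank_span_singleton hu
  have hcnt := lag_count hB hdim (J - 1) W hWiso (by omega)
  have hset : {A ∈ affineLagrangians B | x ∈ A ∧ y ∈ A}
      = (fun M : Submodule (ZMod 2) V => (fun z => x + z) '' (M : Set V)) ''
        {M | IsLagrangian B M ∧ W ≤ M} := by
    ext A
    constructor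
    · rintro ⟨⟨w, M, hM, rfl⟩, h1, h2⟩
      rw [coset_eq h1] at h2 ⊢
      refine ⟨M, ⟨hM, ?_⟩, rfl⟩
      rw [Submodule.span_singleton_le_iff_mem, ← mem_coset (v := x)]
      simpa [u] using h2
    · rintro ⟨M, ⟨hM, hWM⟩, rfl⟩
      rw [Submodule.span_singleton_le_iff_mem] at hWM
      exact ⟨⟨x, M, hM, rfl⟩, ⟨0, M.zero_mem, by simp⟩, ⟨u, hWM, by simp [u]⟩⟩
  have hSc : {A ∈ affineLagrangians B | x ∈ A ∧ y ∈ A}.ncard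
      = ∏ j ∈ Finset.Icc 1 (J - 1), (2 ^ j + 1) := by
    rw [hset, Set.ncard_image_of_injective _ (fun _ _ h => coset_inj h), hcnt]
  have : Fintype V := Fintype.ofFinite V
  have : Fintype (Set V) := Fintype.ofFinite _
  let S : Finset (Set V) := Finset.univ.filter
    (fun A => A ∈ affineLagrangians B ∧ x ∈ A ∧ y ∈ A)
  let T : Finset (Set V) := Finset.univ.filter
    (fun C => (∃ A ∈ affineLagrangians B, ¬A ⊆ D ∧ C = A ∩ Dᶜ) ∧ x ∈ C ∧ y ∈ C)
  have hS : {A ∈ affineLagrangians B | x ∈ A ∧ y ∈ A}.ncard = S.card := by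
    rw [← Set.ncard_coe_finset]; congr 1; ext A; simp [S]
  have hT : {C : Set V | (∃ A ∈ affineLagrangians B, ¬A ⊆ D ∧ C = A ∩ Dᶜ) ∧
        x ∈ C ∧ y ∈ C}.ncard = T.card := by
    rw [← Set.ncard_coe_finset]; congr 1; ext A; simp [T]
  rw [hT]
  have key := Finset.card_mul_eq_card_mul (s := S) (t := T) (fun A C => C = A ∩ Dᶜ)
    (m := 1) (n := 3) ?_ ?_
  · rw [← hS, hSc, mul_one, ← Finset.mul_prod_Ioc_eq_prod_Icc (by omega)] at key
    have e : Finset.Ioc 1 (J - 1) = Finset.Icc 2 (J - 1) := by ext j; simp; omega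
    rw [e] at key
    norm_num at key
    omega
  · intro A hA
    simp only [S, Finset.mem_filter, Finset.mem_univ, true_and] at hA
    rw [Finset.card_eq_one]
    refine ⟨A ∩ Dᶜ, ?_⟩
    ext C
    simp only [T, Finset.bipartiteAbove, Finset.mem_filter, Finset.mem_univ, true_and,
      Finset.mem_singleton]
    constructor
    · rintro ⟨_, h⟩; exact h
    · rintro rfl
      exact ⟨⟨⟨A, hA.1, fun h => hx (h hA.2.1), rfl⟩, ⟨hA.2.1, hx⟩, ⟨hA.2.2, hy⟩⟩, rfl⟩
  · intro C hC
    simp only [T, Finset.mem_filter, Finset.mem_univ, true_and] at hC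
    obtain ⟨⟨A, hA, hAD, rfl⟩, hxC, hyC⟩ := hC
    rw [← three_part hB (by omega) hdim hf hcard hA hAD, ← Set.ncard_coe_finset]
    congr 1
    ext A'
    simp only [S, Finset.bipartiteBelow, Finset.coe_filter, Finset.mem_filter, Finset.mem_univ,
      true_and, Set.mem_ofPred_eq]
    constructor
    · rintro ⟨⟨h1, h2, _⟩, h3⟩
      exact ⟨h1, fun h => hx (h h2), h3.symm⟩
    · rintro ⟨h1, _, h3⟩
      rw [← hD] at h3
      rw [← h3] at hxC hyC
      exact ⟨⟨h1, hxC.1, hyC.1⟩, h3.symm⟩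

end Helpers

/-- For an affine quadric `D` of size `2^{J−1}(2^J+1)`, every
affine Lagrangian subspace not contained in `D` is split in half by `D`;
intersection with `D` is injective on such subspaces while intersection with
`V∖D` is exactly three-to-one; and the resulting distinct traces on `V∖D` form
a BIBD with parameters `(2^{J−1}(2^J−1), 2^{J−1}, ∏_{j=2}^{J−1}(2^j+1))`. -/
theorem affine_lagrangians_outside_affine_quadric
    {J : ℕ} (hJ : 2 ≤ J)
    {V : Type*} [AddCommGroup V] [Module (ZMod 2) V] [Fintype V] [DecidableEq V]
    (hdim : Module.finrank (ZMod 2) V = 2 * J)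
    (B : V →ₗ[ZMod 2] V →ₗ[ZMod 2] ZMod 2) (hB : IsSymplectic B)
    (D : Set V) (hD : IsAffineQuadric B D)
    (hDcard : D.ncard = 2 ^ (J - 1) * (2 ^ J + 1)) :
    (∀ A ∈ affineLagrangians B, ¬A ⊆ D →
      (A ∩ Dᶜ).ncard = 2 ^ (J - 1) ∧ (A ∩ D).ncard = 2 ^ (J - 1)) ∧
    (∀ A₁ ∈ affineLagrangians B, ∀ A₂ ∈ affineLagrangians B,
      ¬A₁ ⊆ D → ¬A₂ ⊆ D → A₁ ∩ D = A₂ ∩ D → A₁ = A₂) ∧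
    (∀ A ∈ affineLagrangians B, ¬A ⊆ D →
      {A' ∈ affineLagrangians B | ¬A' ⊆ D ∧ A' ∩ Dᶜ = A ∩ Dᶜ}.ncard = 3) ∧
    (∀ x ∈ Dᶜ, ∀ y ∈ Dᶜ, x ≠ y →
      {C : Set V | (∃ A ∈ affineLagrangians B, ¬A ⊆ D ∧ C = A ∩ Dᶜ) ∧
        x ∈ C ∧ y ∈ C}.ncard = ∏ j ∈ Finset.Icc 2 (J - 1), (2 ^ j + 1)) := by
  obtain ⟨f, hf, rfl⟩ : ∃ f : V → ZMod 2,
      (∀ x y, f (x + y) + f x + f y + f 0 = B x y) ∧ D = {x | f x = 0} := by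
    obtain ⟨Q, hQ, hDQ⟩ := hD
    have hQ0 : Q 0 = 0 := by
      have := hQ 0 0
      rw [add_zero, map_zero, add_assoc] at this
      generalize Q 0 = a at *
      revert a; decide
    rcases hDQ with rfl | rfl
    · exact ⟨Q, fun x y => by rw [hQ0, add_zero]; exact hQ x y, rfl⟩
    · refine ⟨fun x => Q x + 1, fun x y => ?_, ?_⟩
      · rw [← hQ x y]
        simp only [hQ0]
        generalize Q (x + y) = a
        generalize Q x = b
        generalize Q y = c
        revert a b c; decide
      · ext x
        change ¬ (Q x = 0) ↔ Q x + 1 = 0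
        generalize Q x = a
        revert a; decide
  have hcard : Nat.card V < 2 * {x | f x = 0}.ncard := by
    rw [hDcard, Module.natCard_eq_pow_finrank (K := ZMod 2), Nat.card_zmod, hdim]
    obtain ⟨n, rfl⟩ : ∃ n, J = n + 1 := ⟨J - 1, by omega⟩
    have h := Nat.one_le_two_pow (n := n)
    rw [Nat.add_sub_cancel, mul_comm 2 (n + 1), pow_mul, pow_succ 2 n]
    nlinarith
  exact ⟨fun A hA hAD => half hB (by omega) hdim hf hcard hA hAD,
    fun A₁ h₁ A₂ h₂ h1 _ h => inj_part hB (by omega) hdim hf hcard h₁ h₂ h1 h,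
    fun A hA hAD => three_part hB (by omega) hdim hf hcard hA hAD,
    fun x hx y hy hxy => pair_part hB hJ hdim hf hcard hx hy hxy⟩
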